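/- Assume J satisfies hypothesis (J), G satisfies hypothesis (G), and let u be a solution of the Cauchy problem (C) with initial datum u₀ ∈ C(ℝ^N) ∩ L^∞(ℝ^N) ∩ L¹(ℝ^N), u₀ ≥ 0. Then: (i) if there exists β > 0 such that G(x,s)s ≤ βs for all s ∈ ℝ and a.e. x ∈ ℝ^N, then the map t ↦ ‖u(·,t)‖_{L¹(ℝ^N)} is nonincreasing on [0,∞), and in particular ‖u(·,t)‖_{L¹(ℝ^N)} ≤ ‖u₀‖_{L¹(ℝ^N)} for all t ≥ 0; (ii) if there exists β > 0 such that G(x,s)s ≥ βs for all s ∈ ℝ and a.e. x ∈ ℝ^N, then t ↦ ‖u(·,t)‖_{L¹(ℝ^N)} is nondecreasing on [0,∞), and in particular ‖u(·,t)‖_{L¹(ℝ^N)} ≥ ‖u₀‖_{L¹(ℝ^N)} for all t ≥ 0. -/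

import Mathlib

open MeasureTheory Set Filter Topology Pointwise

noncomputable section

/-- Hypothesis (J): nonnegative, radially symmetric, continuous, compactly supported,
integral one, finite second moments. -/
def HypJ (N : ℕ) (J : (Fin N → ℝ) → ℝ) : Prop :=
  (∀ z, 0 ≤ J z) ∧
  (∀ z w : Fin N → ℝ, (∑ i, z i ^ 2) = (∑ i, w i ^ 2) → J z = J w) ∧
  Continuous J ∧ HasCompactSupport J ∧
  (∫ z, J z) = 1 ∧
  ∀ i : Fin N, Integrable fun z : Fin N → ℝ => J z * z i ^ 2

/-- Hypothesis (G): Carathéodory function with the strong monotonicity condition. -/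
def HypG (N : ℕ) (G : (Fin N → ℝ) → ℝ → ℝ) : Prop :=
  (∀ s : ℝ, Measurable fun x : Fin N → ℝ => G x s) ∧
  (∀ᵐ x : Fin N → ℝ, Continuous fun s : ℝ => G x s) ∧
  ∃ α₁ α₂ : ℝ, 0 < α₁ ∧ α₁ ≤ α₂ ∧
    ∀ᵐ x : Fin N → ℝ, ∀ s σ : ℝ, σ < s →
      α₁ * (s - σ) ≤ G x s * s - G x σ * σ ∧ G x s * s - G x σ * σ ≤ α₂ * (s - σ)

/-- A global-in-time solution of the nonlocal Cauchy problem (C): a continuous curve in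
`C(ℝ^N)` satisfying the integral equation everywhere. -/
def CauchySolutionI (N : ℕ) (J : (Fin N → ℝ) → ℝ) (G : (Fin N → ℝ) → ℝ → ℝ)
    (u₀ : (Fin N → ℝ) → ℝ) (u : (Fin N → ℝ) → ℝ → ℝ) : Prop :=
  (∀ t ∈ Ici (0 : ℝ), Continuous fun x => u x t) ∧
  (∀ t₀ ∈ Ici (0 : ℝ),
    TendstoUniformly (fun t x => u x t) (fun x => u x t₀) (𝓝[Ici (0 : ℝ)] t₀)) ∧
  (∀ x, u x 0 = u₀ x) ∧
  ∀ x, ∀ t ∈ Ioi (0 : ℝ),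
    u x t = (∫ τ in Ioc (0 : ℝ) t, ∫ y : Fin N → ℝ,
      J (x - y) * (u y τ - u x τ) * G x (u y τ - u x τ)) + u₀ x

/-- truncated-in-time solution data -/
lemma aux_int {N : ℕ} {J : (Fin N → ℝ) → ℝ} (hJc : Continuous J) (hJs : HasCompactSupport J)
    {f : (Fin N → ℝ) → ℝ} (hf : Continuous f) (x : Fin N → ℝ) :
    Integrable fun y => J (x - y) * f y := by
  have h1 : HasCompactSupport fun y => J (x - y) :=
    hJs.comp_homeomorph (Homeomorph.subLeft x)
  exact Continuous.integrable_of_hasCompactSupport (by fun_prop) h1.mul_right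

lemma aux_cont {N : ℕ} {J : (Fin N → ℝ) → ℝ} (hJ0 : ∀ z, 0 ≤ J z) (hJc : Continuous J)
    (hJs : HasCompactSupport J)
    {g : ℝ → ℝ} {α : ℝ} (hα : 0 ≤ α) (hg : ∀ s σ, |g s - g σ| ≤ α * |s - σ|) (hg0 : g 0 = 0)
    (hgc : Continuous g)
    {U : (Fin N → ℝ) → ℝ → ℝ} (hU : Continuous fun p : (Fin N → ℝ) × ℝ => U p.1 p.2)
    {M : ℝ} (hM : ∀ x τ, |U x τ| ≤ M) :
    Continuous fun p : (Fin N → ℝ) × ℝ => ∫ z, J z * g (U (p.1 - z) p.2 - U p.1 p.2) := by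
  have hJi : Integrable J := hJc.integrable_of_hasCompactSupport hJs
  refine continuous_of_dominated (bound := fun z => J z * (α * (2 * M))) ?_ ?_ (hJi.mul_const _) ?_
  · intro p
    have : Continuous fun z => U (p.1 - z) p.2 :=
      hU.comp (by fun_prop : Continuous fun z => (p.1 - z, p.2))
    exact Continuous.aestronglyMeasurable (by fun_prop)
  · intro p
    refine Eventually.of_forall fun z => ?_
    rw [norm_mul, Real.norm_eq_abs, Real.norm_eq_abs, abs_of_nonneg (hJ0 z)]
    refine mul_le_mul_of_nonneg_left ?_ (hJ0 z)
    have h1 := hg (U (p.1 - z) p.2 - U p.1 p.2) 0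
    rw [hg0, sub_zero, sub_zero] at h1
    refine h1.trans (mul_le_mul_of_nonneg_left ?_ hα)
    have := abs_sub (U (p.1 - z) p.2) (U p.1 p.2)
    linarith [hM (p.1 - z) p.2, hM p.1 p.2]
  · refine Eventually.of_forall fun z => ?_
    have h1 : Continuous fun p : (Fin N → ℝ) × ℝ => U (p.1 - z) p.2 :=
      hU.comp (by fun_prop : Continuous fun p : (Fin N → ℝ) × ℝ => (p.1 - z, p.2))
    exact continuous_const.mul (hgc.comp (h1.sub hU))

lemma aux_conv {N : ℕ} (J : (Fin N → ℝ) → ℝ) (F : (Fin N → ℝ) → ℝ) (x : Fin N → ℝ) :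
    ∫ y, J (x - y) * F y = ∫ z, J z * F (x - z) := by
  rw [← integral_sub_left_eq_self (fun z => J z * F (x - z)) volume x]
  simp

/-- spatial estimate -/
lemma aux_space {N : ℕ} {J : (Fin N → ℝ) → ℝ} (hJ0 : ∀ z, 0 ≤ J z) (hJc : Continuous J)
    (hJs : HasCompactSupport J) (hJ1 : ∫ z, J z = 1)
    {r : ℝ} (hr : ∀ z, J z ≠ 0 → ‖z‖ ≤ r)
    {v : (Fin N → ℝ) → ℝ} (hv : Continuous v) {M : ℝ} (hv0 : ∀ x, 0 ≤ v x) (hM : ∀ x, v x ≤ M)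
    {ρ : (Fin N → ℝ) → ℝ} (hρc : Continuous ρ) (hρi : Integrable ρ) (hρ0 : ∀ x, 0 ≤ ρ x)
    {κ : ℝ} (hκ : ∀ x z, ‖z‖ ≤ r → |ρ (x + z) - ρ x| ≤ κ * ρ x) :
    |∫ x, ρ x * ∫ z, J z * (v (x - z) - v x)| ≤ κ * ∫ x, ρ x * v x := by
  have hJi : Integrable J := hJc.integrable_of_hasCompactSupport hJs
  have hM0 : 0 ≤ M := (hv0 0).trans (hM 0)
  have hρv : Integrable fun x => ρ x * v x := by
    refine (hρi.mul_const M).mono' (by fun_prop) (Eventually.of_forall fun x => ?_)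
    rw [Real.norm_eq_abs, abs_of_nonneg (mul_nonneg (hρ0 x) (hv0 x))]
    exact mul_le_mul_of_nonneg_left (hM x) (hρ0 x)
  have hsw : ∫ x, ρ x * ∫ z, J z * (v (x - z) - v x)
      = ∫ z, ∫ x, ρ x * (J z * (v (x - z) - v x)) := by
    simp_rw [← integral_const_mul]
    refine integral_integral_swap ?_
    refine ((hρi.mul_prod hJi).mul_const M).mono' ?_ ?_
    · refine Continuous.aestronglyMeasurable ?_
      simp only [Function.uncurry_def]
      fun_prop
    · refine Eventually.of_forall fun p => ?_
      simp only [Function.uncurry_def]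
      rw [norm_mul, norm_mul, Real.norm_eq_abs, Real.norm_eq_abs, Real.norm_eq_abs,
        abs_of_nonneg (hρ0 _), abs_of_nonneg (hJ0 _), ← mul_assoc]
      refine mul_le_mul_of_nonneg_left ?_ (mul_nonneg (hρ0 _) (hJ0 _))
      rw [abs_le]
      constructor <;> linarith [hv0 p.1, hM p.1, hv0 (p.1 - p.2), hM (p.1 - p.2)]
  have hz : ∀ z, ∫ x, ρ x * (J z * (v (x - z) - v x)) = J z * ∫ x, (ρ (x + z) - ρ x) * v x := by
    intro z
    have hi1 : Integrable fun x => ρ (x + z) * v x := by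
      refine ((hρi.comp_add_right z).mul_const M).mono' (by fun_prop)
        (Eventually.of_forall fun x => ?_)
      rw [Real.norm_eq_abs, abs_of_nonneg (mul_nonneg (hρ0 _) (hv0 x))]
      exact mul_le_mul_of_nonneg_left (hM x) (hρ0 _)
    have hi2 : Integrable fun x => ρ x * v (x - z) := by
      refine (hρi.mul_const M).mono' (by fun_prop) (Eventually.of_forall fun x => ?_)
      rw [Real.norm_eq_abs, abs_of_nonneg (mul_nonneg (hρ0 _) (hv0 _))]
      exact mul_le_mul_of_nonneg_left (hM _) (hρ0 _)
    have e1 : ∫ x, ρ x * v (x - z) = ∫ x, ρ (x + z) * v x := by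
      rw [← integral_sub_right_eq_self (fun x => ρ (x + z) * v x) z]
      simp
    calc ∫ x, ρ x * (J z * (v (x - z) - v x))
        = J z * ∫ x, (ρ x * v (x - z) - ρ x * v x) := by
          rw [← integral_const_mul]; congr 1; ext x; ring
      _ = J z * ∫ x, (ρ (x + z) - ρ x) * v x := by
          rw [integral_sub hi2 hρv, e1, ← integral_sub hi1 hρv]
          congr 2; ext x; ring
  rw [hsw]
  simp_rw [hz]
  have hb : ∀ z, ‖J z * ∫ x, (ρ (x + z) - ρ x) * v x‖ ≤ J z * (κ * ∫ x, ρ x * v x) := by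
    intro z
    rw [norm_mul, Real.norm_eq_abs, abs_of_nonneg (hJ0 z)]
    by_cases h : J z = 0
    · simp [h]
    refine mul_le_mul_of_nonneg_left ?_ (hJ0 z)
    rw [← integral_const_mul]
    refine norm_integral_le_of_norm_le (hρv.const_mul κ) (Eventually.of_forall fun x => ?_)
    rw [norm_mul, Real.norm_eq_abs, Real.norm_eq_abs, abs_of_nonneg (hv0 x), ← mul_assoc]
    exact mul_le_mul_of_nonneg_right (hκ x z (hr z h)) (hv0 x)
  have := norm_integral_le_of_norm_le (hJi.mul_const _) (Eventually.of_forall hb)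
  rwa [integral_mul_const, hJ1, one_mul] at this

lemma aux_time {N : ℕ} {J : (Fin N → ℝ) → ℝ} (hJ0 : ∀ z, 0 ≤ J z) (hJc : Continuous J)
    (hJs : HasCompactSupport J) (hJ1 : ∫ z, J z = 1)
    {r : ℝ} (hr : ∀ z, J z ≠ 0 → ‖z‖ ≤ r)
    {U : (Fin N → ℝ) → ℝ → ℝ} (hU : Continuous fun p : (Fin N → ℝ) × ℝ => U p.1 p.2)
    {M : ℝ} (hU0 : ∀ x τ, 0 ≤ U x τ) (hM : ∀ x τ, U x τ ≤ M)
    {ρ : (Fin N → ℝ) → ℝ} (hρc : Continuous ρ) (hρi : Integrable ρ) (hρ0 : ∀ x, 0 ≤ ρ x)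
    {κ : ℝ} (hκ0 : 0 ≤ κ) (hκ : ∀ x z, ‖z‖ ≤ r → |ρ (x + z) - ρ x| ≤ κ * ρ x)
    {a b S : ℝ} (hab : a ≤ b) (hS : ∀ τ ∈ Icc a b, ∫ x, ρ x * U x τ ≤ S) :
    Integrable (fun x => ρ x * ∫ τ in a..b, ∫ z, J z * (U (x - z) τ - U x τ)) ∧
    |∫ x, ρ x * ∫ τ in a..b, ∫ z, J z * (U (x - z) τ - U x τ)| ≤ κ * S * (b - a) := by
  have hJi : Integrable J := hJc.integrable_of_hasCompactSupport hJs
  have hcont : Continuous fun p : (Fin N → ℝ) × ℝ => ∫ z, J z * (U (p.1 - z) p.2 - U p.1 p.2) :=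
    aux_cont hJ0 hJc hJs (g := fun s => s) (α := 1) zero_le_one (by simp) rfl continuous_id hU
      (M := M) (fun x τ => by rw [abs_of_nonneg (hU0 x τ)]; exact hM x τ)
  have hbd : ∀ x τ, |∫ z, J z * (U (x - z) τ - U x τ)| ≤ M := by
    intro x τ
    have := norm_integral_le_of_norm_le (f := fun z => J z * (U (x - z) τ - U x τ))
      (hJi.mul_const M) (Eventually.of_forall fun z => ?_)
    · rwa [integral_mul_const, hJ1, one_mul] at this
    · rw [norm_mul, Real.norm_eq_abs, Real.norm_eq_abs, abs_of_nonneg (hJ0 z)]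
      refine mul_le_mul_of_nonneg_left ?_ (hJ0 z)
      rw [abs_le]
      constructor <;> linarith [hU0 x τ, hM x τ, hU0 (x - z) τ, hM (x - z) τ]
  have hint : Integrable (Function.uncurry fun (τ : ℝ) (x : Fin N → ℝ) =>
      ρ x * ∫ z, J z * (U (x - z) τ - U x τ)) ((volume.restrict (uIoc a b)).prod volume) := by
    have hc : Integrable (fun _ : ℝ => M) (volume.restrict (uIoc a b)) := by
      rw [uIoc_of_le hab]; exact integrable_const M
    refine (hc.mul_prod hρi).mono' ?_ ?_
    · refine Continuous.aestronglyMeasurable ?_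
      simp only [Function.uncurry_def]
      exact (hρc.comp continuous_snd).mul (hcont.comp continuous_swap)
    · refine Eventually.of_forall fun p => ?_
      simp only [Function.uncurry_def]
      rw [norm_mul, Real.norm_eq_abs, Real.norm_eq_abs, abs_of_nonneg (hρ0 _), mul_comm]
      exact mul_le_mul_of_nonneg_right (hbd _ _) (hρ0 _)
  constructor
  · have := hint.integral_prod_right
    simp only [Function.uncurry_def, integral_const_mul] at this
    simpa [intervalIntegral.integral_of_le hab, uIoc_of_le hab] using this
  · simp_rw [← intervalIntegral.integral_const_mul]
    rw [← intervalIntegral_integral_swap hint]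
    have := intervalIntegral.norm_integral_le_of_norm_le_const (a := a) (b := b) (C := κ * S)
      (f := fun τ => ∫ x, ρ x * ∫ z, J z * (U (x - z) τ - U x τ)) ?_
    · rwa [abs_of_nonneg (sub_nonneg.2 hab)] at this
    · intro τ hτ
      rw [uIoc_of_le hab] at hτ
      refine (aux_space hJ0 hJc hJs hJ1 hr (v := fun x => U x τ)
        (hU.comp (by fun_prop : Continuous fun x => (x, τ))) (fun x => hU0 x τ) (fun x => hM x τ)
        hρc hρi hρ0 hκ).trans ?_
      exact mul_le_mul_of_nonneg_left (hS τ ⟨hτ.1.le, hτ.2⟩) hκ0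

lemma aux_sup {f : ℝ → ℝ} {s t A c B : ℝ} (hB : ∀ τ ∈ Icc s t, f τ ≤ B)
    (hc0 : 0 ≤ c) (hc : c ≤ 1 / 2) (hA : 0 ≤ A)
    (h : ∀ S, (∀ σ ∈ Icc s t, f σ ≤ S) → ∀ τ ∈ Icc s t, f τ ≤ A + c * S) :
    ∀ τ ∈ Icc s t, f τ ≤ (1 + 2 * c) * A := by
  intro τ hτ
  have hbdd : BddAbove (f '' Icc s t) := ⟨B, by rintro _ ⟨σ, hσ, rfl⟩; exact hB σ hσ⟩
  have hS : ∀ σ ∈ Icc s t, f σ ≤ sSup (f '' Icc s t) := fun σ hσ => le_csSup hbdd ⟨σ, hσ, rfl⟩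
  have h1 := h _ hS
  have h2 : sSup (f '' Icc s t) ≤ A + c * sSup (f '' Icc s t) :=
    csSup_le ⟨_, τ, hτ, rfl⟩ (by rintro _ ⟨σ, hσ, rfl⟩; exact h1 σ hσ)
  have h3 : sSup (f '' Icc s t) ≤ 2 * A := by
    by_contra hcon
    push Not at hcon
    nlinarith
  have := h1 τ hτ
  nlinarith

/-- weights -/
def wt (N : ℕ) (n : ℕ) (x : Fin N → ℝ) : ℝ := ((1 + ‖x‖ / (n + 1)) ^ (N + 1))⁻¹

lemma wt_pos {N n : ℕ} (x : Fin N → ℝ) : 0 < wt N n x := by unfold wt; positivity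

lemma wt_le_one {N n : ℕ} (x : Fin N → ℝ) : wt N n x ≤ 1 := by
  unfold wt
  refine inv_le_one_of_one_le₀ (one_le_pow₀ ?_)
  have : 0 ≤ ‖x‖ / ((n : ℝ) + 1) := by positivity
  linarith

lemma wt_cont {N n : ℕ} : Continuous (wt N n) := by
  unfold wt
  refine Continuous.inv₀ (by fun_prop) (fun x => ?_)
  positivity

lemma wt_int {N n : ℕ} : Integrable (wt N n) := by
  have h := integrable_one_add_norm (E := Fin N → ℝ) (μ := volume) (r := ((N + 1 : ℕ) : ℝ))
    (by simp)
  refine (h.const_mul (((n : ℝ) + 1) ^ (N + 1))).mono' wt_cont.aestronglyMeasurable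
    (Eventually.of_forall fun x => ?_)
  rw [Real.norm_eq_abs, abs_of_pos (wt_pos x), Real.rpow_neg (by positivity), Real.rpow_natCast]
  unfold wt
  rw [← div_eq_mul_inv, inv_eq_one_div, div_le_div_iff₀ (by positivity) (by positivity), one_mul,
    ← mul_pow]
  refine pow_le_pow_left₀ (by positivity) ?_ _
  have : ((n : ℝ) + 1) * (1 + ‖x‖ / (n + 1)) = n + 1 + ‖x‖ := by field_simp
  rw [this]
  have : (0 : ℝ) ≤ n := by positivity
  linarith

lemma wt_shift {N n : ℕ} {r : ℝ} (hr : 0 ≤ r) (x z : Fin N → ℝ) (hz : ‖z‖ ≤ r) :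
    |wt N n (x + z) - wt N n x| ≤ ((1 + r / (n + 1)) ^ (N + 1) - 1) * wt N n x := by
  have key : ∀ x z : Fin N → ℝ, ‖z‖ ≤ r →
      wt N n (x + z) ≤ (1 + r / (n + 1)) ^ (N + 1) * wt N n x := by
    intro x z hz
    unfold wt
    rw [← div_eq_mul_inv, inv_eq_one_div, div_le_div_iff₀ (by positivity) (by positivity), one_mul,
      ← mul_pow]
    refine pow_le_pow_left₀ (by positivity) ?_ _
    have h1 : ‖x‖ ≤ ‖x + z‖ + r := by
      have := norm_sub_le (x + z) z
      rw [add_sub_cancel_right] at this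
      linarith
    have h2 : ‖x‖ / ((n : ℝ) + 1) ≤ ‖x + z‖ / (n + 1) + r / (n + 1) := by
      rw [← add_div]; gcongr
    have h3 : 0 ≤ r / ((n : ℝ) + 1) * (‖x + z‖ / (n + 1)) := by positivity
    nlinarith
  have k1 := key x z hz
  have k2 := key (x + z) (-z) (by simpa using hz)
  rw [add_neg_cancel_right] at k2
  set c := (1 + r / ((n : ℝ) + 1)) ^ (N + 1)
  have hc : 1 ≤ c := one_le_pow₀ (by have : 0 ≤ r / ((n : ℝ) + 1) := by positivity
                                     linarith)
  have p1 := wt_pos (n := n) x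
  have p2 := wt_pos (n := n) (x + z)
  rw [abs_le]
  constructor
  · by_cases h : wt N n x ≤ wt N n (x + z)
    · nlinarith
    · push Not at h
      nlinarith
  · linarith

lemma wt_kappa (N : ℕ) (r C : ℝ) :
    Tendsto (fun n : ℕ => C * ((1 + r / ((n : ℝ) + 1)) ^ (N + 1) - 1)) atTop (𝓝 0) := by
  have h : Tendsto (fun n : ℕ => r / ((n : ℝ) + 1)) atTop (𝓝 0) :=
    tendsto_const_nhds.div_atTop (tendsto_natCast_atTop_atTop.atTop_add tendsto_const_nhds)
  have := (((h.const_add 1).pow (N + 1)).sub_const 1).const_mul C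
  simpa using this

lemma wt_tendsto (N : ℕ) (x : Fin N → ℝ) : Tendsto (fun n : ℕ => wt N n x) atTop (𝓝 1) := by
  have h : Tendsto (fun n : ℕ => ‖x‖ / ((n : ℝ) + 1)) atTop (𝓝 0) :=
    tendsto_const_nhds.div_atTop (tendsto_natCast_atTop_atTop.atTop_add tendsto_const_nhds)
  have := ((h.const_add 1).pow (N + 1)).inv₀ (by simp)
  simpa [wt] using this

lemma wt_limit {N : ℕ} {v w : (Fin N → ℝ) → ℝ} (hv : Continuous v) (hw : Continuous w)
    (hv0 : ∀ x, 0 ≤ v x) (hw0 : ∀ x, 0 ≤ w x) {M : ℝ} (hvM : ∀ x, v x ≤ M) (hwM : ∀ x, w x ≤ M)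
    {c : ℕ → ℝ} (hc : Tendsto c atTop (𝓝 0))
    (h : ∀ᶠ n in atTop, ∫ x, wt N n x * v x ≤ (1 + c n) * ∫ x, wt N n x * w x) :
    ∫⁻ x, ENNReal.ofReal (v x) ≤ ∫⁻ x, ENNReal.ofReal (w x) := by
  have hint : ∀ {f : (Fin N → ℝ) → ℝ}, Continuous f → (∀ x, 0 ≤ f x) → (∀ x, f x ≤ M) → ∀ n,
      Integrable fun x => wt N n x * f x := by
    intro f hf h0 hM n
    refine (wt_int (n := n).mul_const M).mono' (wt_cont.mul hf).aestronglyMeasurable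
      (Eventually.of_forall fun x => ?_)
    rw [Real.norm_eq_abs, abs_of_nonneg (mul_nonneg (wt_pos x).le (h0 x))]
    exact mul_le_mul_of_nonneg_left (hM x) (wt_pos x).le
  by_cases htop : ∫⁻ x, ENNReal.ofReal (w x) = ⊤
  · rw [htop]; exact le_top
  have hwint : Integrable w := by
    refine ⟨hw.aestronglyMeasurable, ?_⟩
    rw [hasFiniteIntegral_iff_ofReal (Eventually.of_forall hw0)]
    exact lt_top_iff_ne_top.2 htop
  rw [← ofReal_integral_eq_lintegral_ofReal hwint (Eventually.of_forall hw0)]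
  have e1 : ∀ x, liminf (fun n => ENNReal.ofReal (wt N n x * v x)) atTop = ENNReal.ofReal (v x) := by
    intro x
    refine Tendsto.liminf_eq ?_
    have := ENNReal.tendsto_ofReal ((wt_tendsto N x).mul_const (v x))
    simpa using this
  have fatou := lintegral_liminf_le (μ := (volume : Measure (Fin N → ℝ))) (u := (atTop : Filter ℕ))
    (f := fun n x => ENNReal.ofReal (wt N n x * v x))
    (fun n => (ENNReal.continuous_ofReal.comp (wt_cont.mul hv)).measurable)
  simp_rw [e1] at fatou
  refine fatou.trans ?_
  have hlim : Tendsto (fun n => ENNReal.ofReal ((1 + c n) * ∫ x, w x)) atTop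
      (𝓝 (ENNReal.ofReal (∫ x, w x))) := by
    have := ENNReal.tendsto_ofReal ((hc.const_add 1).mul_const (∫ x, w x))
    simpa using this
  rw [← hlim.liminf_eq]
  refine liminf_le_liminf ?_
  filter_upwards [h, hc.eventually (lt_mem_nhds (by norm_num : (-1 : ℝ) < 0))] with n hn hn'
  rw [← ofReal_integral_eq_lintegral_ofReal (hint hv hv0 hvM n)
    (Eventually.of_forall fun x => mul_nonneg (wt_pos x).le (hv0 x))]
  refine ENNReal.ofReal_le_ofReal (hn.trans (mul_le_mul_of_nonneg_left ?_ (by linarith)))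
  refine integral_mono (hint hw hw0 hwM n) hwint fun x => ?_
  exact mul_le_of_le_one_left (hw0 x) (wt_le_one x)

lemma sol_bdd {N : ℕ} {J : (Fin N → ℝ) → ℝ} {G : (Fin N → ℝ) → ℝ → ℝ}
    {u₀ : (Fin N → ℝ) → ℝ} (hu₀b : ∃ M, ∀ x, |u₀ x| ≤ M)
    {u : (Fin N → ℝ) → ℝ → ℝ} (hu : CauchySolutionI N J G u₀ u) (T : ℝ) :
    ∃ M, ∀ t ∈ Icc 0 T, ∀ x, |u x t| ≤ M := by
  obtain ⟨_, hunif, h0, _⟩ := hu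
  have hloc : ∀ t₀ ∈ Ici (0 : ℝ), ∀ᶠ t in 𝓝[Ici (0 : ℝ)] t₀, ∀ x, |u x t₀ - u x t| < 1 := by
    intro t₀ ht₀
    have := Metric.tendstoUniformly_iff.1 (hunif t₀ ht₀) 1 one_pos
    simpa [Real.dist_eq] using this
  have hrel : ∀ t ∈ Ici (0 : ℝ), ∃ K, ∀ x, |u x 0 - u x t| ≤ K := by
    intro t ht
    refine (isPreconnected_Ici (a := (0 : ℝ))).induction₂
      (fun s t => ∃ K, ∀ x, |u x s - u x t| ≤ K) ?_ ?_ ?_ self_mem_Ici ht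
    · intro s hs
      filter_upwards [hloc s hs] with t ht
      exact ⟨1, fun x => (ht x).le⟩
    · rintro a b c - - - ⟨K, hK⟩ ⟨L, hL⟩
      exact ⟨K + L, fun x => (abs_sub_le _ (u x b) _).trans (add_le_add (hK x) (hL x))⟩
    · rintro a b - - ⟨K, hK⟩
      exact ⟨K, fun x => by rw [abs_sub_comm]; exact hK x⟩
  obtain ⟨M₀, hM₀⟩ := hu₀b
  refine isCompact_Icc.induction_on (p := fun s => ∃ M, ∀ t ∈ s, ∀ x, |u x t| ≤ M) ?_ ?_ ?_ ?_
  · exact ⟨0, by simp⟩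
  · rintro s t hst ⟨M, hM⟩
    exact ⟨M, fun τ hτ => hM τ (hst hτ)⟩
  · rintro s t ⟨M, hM⟩ ⟨L, hL⟩
    refine ⟨max M L, ?_⟩
    rintro τ (hτ | hτ) x
    · exact (hM τ hτ x).trans (le_max_left _ _)
    · exact (hL τ hτ x).trans (le_max_right _ _)
  · intro t₀ ht₀
    refine ⟨_, nhdsWithin_mono _ Icc_subset_Ici_self (hloc t₀ ht₀.1), ?_⟩
    obtain ⟨K, hK⟩ := hrel t₀ ht₀.1
    refine ⟨M₀ + K + 1, fun t ht x => ?_⟩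
    have h1 := ht x
    have h2 := hK x
    have h3 := hM₀ x
    rw [h0] at h2
    rw [abs_le] at *
    rw [abs_lt] at h1
    constructor <;> linarith

lemma sol_cont {N : ℕ} {J : (Fin N → ℝ) → ℝ} {G : (Fin N → ℝ) → ℝ → ℝ}
    {u₀ : (Fin N → ℝ) → ℝ} {u : (Fin N → ℝ) → ℝ → ℝ} (hu : CauchySolutionI N J G u₀ u) (T : ℝ) :
    Continuous fun p : (Fin N → ℝ) × ℝ => u p.1 (max 0 (min T p.2)) := by
  obtain ⟨hc, hunif, _, _⟩ := hu
  rw [continuous_iff_continuousAt]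
  rintro ⟨x₀, τ₀⟩
  rw [ContinuousAt, Metric.tendsto_nhds]
  intro ε hε
  have hm : ∀ τ : ℝ, max 0 (min T τ) ∈ Ici (0 : ℝ) := fun τ => mem_Ici.2 (le_max_left _ _)
  have h1 := Metric.tendstoUniformly_iff.1 (hunif _ (hm τ₀)) (ε / 2) (half_pos hε)
  have ht : Tendsto (fun p : (Fin N → ℝ) × ℝ => max 0 (min T p.2)) (𝓝 (x₀, τ₀))
      (𝓝[Ici (0 : ℝ)] (max 0 (min T τ₀))) := by
    refine tendsto_nhdsWithin_iff.2 ⟨?_, Eventually.of_forall fun p => hm _⟩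
    exact (by fun_prop : Continuous fun p : (Fin N → ℝ) × ℝ => max 0 (min T p.2)).tendsto (x₀, τ₀)
  have h2 : ∀ᶠ p : (Fin N → ℝ) × ℝ in 𝓝 (x₀, τ₀),
      dist (u p.1 (max 0 (min T τ₀))) (u x₀ (max 0 (min T τ₀))) < ε / 2 :=
    Metric.tendsto_nhds.1 (((hc _ (hm τ₀)).comp continuous_fst).tendsto (x₀, τ₀)) _ (half_pos hε)
  filter_upwards [ht.eventually h1, h2] with p hp hp2
  calc dist (u p.1 (max 0 (min T p.2))) (u x₀ (max 0 (min T τ₀)))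
      ≤ dist (u p.1 (max 0 (min T p.2))) (u p.1 (max 0 (min T τ₀))) +
        dist (u p.1 (max 0 (min T τ₀))) (u x₀ (max 0 (min T τ₀))) := dist_triangle _ _ _
    _ < ε / 2 + ε / 2 := by rw [dist_comm] ; exact add_lt_add (hp p.1) hp2
    _ = ε := by ring

/-- A good nonlinearity. -/
def GoodG (α : ℝ) (g : ℝ → ℝ) : Prop :=
  Continuous g ∧ g 0 = 0 ∧ (∀ s σ, |g s - g σ| ≤ α * |s - σ|) ∧
    ∀ s σ, σ < s → 0 ≤ g s - g σ ∧ g s - g σ ≤ α * (s - σ)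

lemma good_ae {N : ℕ} {G : (Fin N → ℝ) → ℝ → ℝ} (hG : HypG N G) :
    ∃ α > 0, ∀ᵐ x : Fin N → ℝ, GoodG α (fun s => s * G x s) := by
  obtain ⟨_, hc, α₁, α₂, h1, h2, h3⟩ := hG
  refine ⟨α₂, h1.trans_le h2, ?_⟩
  filter_upwards [hc, h3] with x hx hx3
  have h4 : ∀ s σ, σ < s → 0 ≤ s * G x s - σ * G x σ ∧ s * G x s - σ * G x σ ≤ α₂ * (s - σ) := by
    intro s σ hs
    have := hx3 s σ hs
    have h5 : 0 ≤ α₁ * (s - σ) := mul_nonneg h1.le (by linarith)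
    constructor <;> nlinarith
  refine ⟨by fun_prop, by simp, ?_, h4⟩
  intro s σ
  rcases lt_trichotomy s σ with h | h | h
  · have := h4 _ _ h
    rw [abs_sub_comm, abs_sub_comm s, abs_of_nonneg this.1, abs_of_pos (sub_pos.2 h)]
    exact this.2
  · simp [h]
  · have := h4 _ _ h
    rw [abs_of_nonneg this.1, abs_of_pos (sub_pos.2 h)]
    exact this.2

lemma sol_eq {N : ℕ} {J : (Fin N → ℝ) → ℝ} (hJ0 : ∀ z, 0 ≤ J z) (hJc : Continuous J)
    (hJs : HasCompactSupport J) {G : (Fin N → ℝ) → ℝ → ℝ}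
    {u₀ : (Fin N → ℝ) → ℝ} (hu₀b : ∃ M, ∀ x, |u₀ x| ≤ M)
    {u : (Fin N → ℝ) → ℝ → ℝ} (hu : CauchySolutionI N J G u₀ u) {T : ℝ} (hT : 0 ≤ T)
    {U : (Fin N → ℝ) → ℝ → ℝ} (hU : U = fun x τ => u x (max 0 (min T τ)))
    {x : Fin N → ℝ} {α : ℝ} (hα : 0 < α) (hx : GoodG α (fun s => s * G x s)) :
    Continuous (fun τ => ∫ z, J z * ((U (x - z) τ - U x τ) * G x (U (x - z) τ - U x τ))) ∧
    ∀ t ∈ Icc 0 T, U x t = u₀ x + ∫ τ in (0 : ℝ)..t,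
      ∫ z, J z * ((U (x - z) τ - U x τ) * G x (U (x - z) τ - U x τ)) := by
  obtain ⟨M, hM⟩ := sol_bdd hu₀b hu T
  have hUc : Continuous fun p : (Fin N → ℝ) × ℝ => U p.1 p.2 := by
    rw [hU]; exact sol_cont hu T
  have hUM : ∀ x τ, |U x τ| ≤ M := by
    intro x τ
    rw [hU]
    exact hM _ ⟨le_max_left _ _, max_le hT (min_le_left _ _)⟩ x
  have hUu : ∀ x, ∀ τ ∈ Icc 0 T, U x τ = u x τ := by
    intro x τ hτ
    rw [hU]
    simp [min_eq_right hτ.2, max_eq_right hτ.1]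
  refine ⟨(aux_cont hJ0 hJc hJs hα.le hx.2.2.1 hx.2.1 hx.1 hUc hUM).comp
    (by fun_prop : Continuous fun τ : ℝ => (x, τ)), ?_⟩
  intro t ht
  rcases ht.1.eq_or_lt with rfl | h
  · rw [hUu x _ ht, hu.2.2.1]; simp
  · rw [hUu x _ ht, hu.2.2.2 x t h, add_comm, intervalIntegral.integral_of_le ht.1]
    congr 1
    refine setIntegral_congr_fun measurableSet_Ioc fun τ hτ => ?_
    have hτ' : τ ∈ Icc 0 T := ⟨hτ.1.le, hτ.2.trans ht.2⟩
    rw [← aux_conv J (fun y => (U y τ - U x τ) * G x (U y τ - U x τ))]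
    congr 1
    ext y
    rw [hUu x _ hτ', hUu y _ hτ', mul_assoc]

lemma sol_nonneg {N : ℕ} {J : (Fin N → ℝ) → ℝ} (hJ0 : ∀ z, 0 ≤ J z) (hJc : Continuous J)
    (hJs : HasCompactSupport J) (hJ1 : ∫ z, J z = 1) {G : (Fin N → ℝ) → ℝ → ℝ} (hG : HypG N G)
    {u₀ : (Fin N → ℝ) → ℝ} (hu₀b : ∃ M, ∀ x, |u₀ x| ≤ M) (hu₀pos : ∀ x, 0 ≤ u₀ x)
    {u : (Fin N → ℝ) → ℝ → ℝ} (hu : CauchySolutionI N J G u₀ u) {T : ℝ} (hT : 0 ≤ T) :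
    ∀ t ∈ Icc 0 T, ∀ x, 0 ≤ u x t := by
  obtain ⟨M, hM⟩ := sol_bdd hu₀b hu T
  obtain ⟨α, hα, hgood⟩ := good_ae hG
  have hJi : Integrable J := hJc.integrable_of_hasCompactSupport hJs
  have hM0 : 0 ≤ M := (abs_nonneg _).trans (hM 0 ⟨le_rfl, hT⟩ 0)
  set U : (Fin N → ℝ) → ℝ → ℝ := fun x τ => u x (max 0 (min T τ)) with hU
  have hUu : ∀ x, ∀ τ ∈ Icc 0 T, U x τ = u x τ := by
    intro x τ hτ
    rw [hU]
    simp [min_eq_right hτ.2, max_eq_right hτ.1]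
  have hUc : Continuous fun p : (Fin N → ℝ) × ℝ => U p.1 p.2 := sol_cont hu T
  set θ : ℝ := 1 - Real.exp (-(α * T)) with hθ
  have hθ0 : 0 ≤ θ := by
    have : Real.exp (-(α * T)) ≤ 1 := Real.exp_le_one_iff.2 (by have := mul_nonneg hα.le hT; linarith)
    linarith
  have hθ1 : θ < 1 := by have := Real.exp_pos (-(α * T)); linarith
  have step : ∀ K, 0 ≤ K → (∀ t ∈ Icc 0 T, ∀ x, -K ≤ u x t) →
      ∀ t ∈ Icc 0 T, ∀ x, -(K * θ) ≤ u x t := by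
    intro K hK hlow t ht
    have hae : ∀ᵐ x : Fin N → ℝ, -(K * θ) ≤ u x t := by
      filter_upwards [hgood] with x hx
      obtain ⟨hhc, hrep⟩ := sol_eq hJ0 hJc hJs hu₀b hu hT hU hα hx
      set h : ℝ → ℝ := fun τ => ∫ z, J z * ((U (x - z) τ - U x τ) * G x (U (x - z) τ - U x τ))
        with hh
      have hlb : ∀ τ ∈ Icc 0 T, -(α * (U x τ + K)) ≤ h τ := by
        intro τ hτ
        have hq : 0 ≤ U x τ + K := by rw [hUu x τ hτ]; linarith [hlow τ hτ x]
        have e : -(α * (U x τ + K)) = ∫ z, J z * (-(α * (U x τ + K))) := by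
          rw [integral_mul_const, hJ1, one_mul]
        rw [e, hh]
        have hcz : Continuous fun z => U (x - z) τ :=
          hUc.comp (by fun_prop : Continuous fun z => (x - z, τ))
        refine integral_mono (hJi.mul_const _) ?_ fun z => ?_
        · refine Continuous.integrable_of_hasCompactSupport ?_ hJs.mul_right
          exact hJc.mul (hx.1.comp (hcz.sub continuous_const))
        · refine mul_le_mul_of_nonneg_left ?_ (hJ0 z)
          have hs : -(U x τ + K) ≤ U (x - z) τ - U x τ := by
            rw [hUu (x - z) τ hτ]; linarith [hlow τ hτ (x - z)]
          generalize U (x - z) τ - U x τ = s at hs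
          have h0 := hx.2.1
          simp only at h0
          rcases lt_trichotomy s 0 with hs0 | hs0 | hs0
          · have := (hx.2.2.2 0 s hs0).2
            simp only at this
            nlinarith
          · subst hs0
            rw [h0]; nlinarith
          · have := (hx.2.2.2 s 0 hs0).1
            simp only at this
            nlinarith
      set v : ℝ → ℝ := fun t => u₀ x + ∫ τ in (0 : ℝ)..t, h τ with hv
      have hvd : ∀ t, HasDerivAt v (h t) t := fun t =>
        (hhc.integral_hasStrictDerivAt 0 t).hasDerivAt.const_add _
      have hwd : ∀ t, HasDerivAt (fun t => Real.exp (α * t) * (v t + K))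
          (Real.exp (α * t) * α * (v t + K) + Real.exp (α * t) * h t) t := by
        intro t
        have h1 : HasDerivAt (fun t => Real.exp (α * t)) (Real.exp (α * t) * α) t := by
          simpa using ((hasDerivAt_id t).const_mul α).exp
        exact h1.mul ((hvd t).add_const K)
      have hmono : MonotoneOn (fun t => Real.exp (α * t) * (v t + K)) (Icc 0 T) := by
        refine monotoneOn_of_deriv_nonneg (convex_Icc _ _)
          (fun t _ => (hwd t).continuousAt.continuousWithinAt)
          (fun t _ => (hwd t).differentiableAt.differentiableWithinAt) fun t ht => ?_
        rw [interior_Icc] at ht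
        have ht' : t ∈ Icc 0 T := Ioo_subset_Icc_self ht
        rw [(hwd t).deriv]
        have h1 := hlb t ht'
        rw [hrep t ht'] at h1
        have h2 := Real.exp_pos (α * t)
        have h3 : 0 ≤ Real.exp (α * t) * (α * (v t + K) + h t) :=
          mul_nonneg h2.le (by simp only [hv]; linarith)
        linarith
      have hfin := hmono ⟨le_rfl, hT⟩ ht ht.1
      simp only [mul_zero, Real.exp_zero, one_mul] at hfin
      have hv0 : v 0 = u₀ x := by simp [hv]
      have hvt : v t = u x t := by rw [← hUu x t ht, hrep t ht]
      rw [hv0, hvt] at hfin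
      have h1 : K ≤ Real.exp (α * t) * (u x t + K) := by linarith [hu₀pos x]
      have h2 : Real.exp (-(α * t)) * K ≤ u x t + K := by
        have := mul_le_mul_of_nonneg_left h1 (Real.exp_pos (-(α * t))).le
        rwa [← mul_assoc, ← Real.exp_add, neg_add_cancel, Real.exp_zero, one_mul] at this
      have h3 : Real.exp (-(α * T)) ≤ Real.exp (-(α * t)) :=
        Real.exp_le_exp.2 (by nlinarith [ht.2])
      rw [hθ]
      nlinarith
    have hcl : IsClosed {x : Fin N → ℝ | -(K * θ) ≤ u x t} :=
      isClosed_le continuous_const (hu.1 t ht.1)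
    intro x
    have := (Measure.dense_of_ae hae).closure_eq
    rw [hcl.closure_eq] at this
    exact (this ▸ mem_univ x : x ∈ {x : Fin N → ℝ | -(K * θ) ≤ u x t})
  have iter : ∀ n : ℕ, ∀ t ∈ Icc 0 T, ∀ x, -(M * θ ^ n) ≤ u x t := by
    intro n
    induction n with
    | zero => intro t ht x; simpa using (abs_le.1 (hM t ht x)).1
    | succ n ih =>
      intro t ht x
      have := step (M * θ ^ n) (by positivity) ih t ht x
      rwa [mul_assoc, ← pow_succ] at this
  intro t ht x
  have hl : Tendsto (fun n : ℕ => -(M * θ ^ n)) atTop (𝓝 0) := by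
    have := ((tendsto_pow_atTop_nhds_zero_of_lt_one hθ0 hθ1).const_mul M).neg
    simpa using this
  exact le_of_tendsto' hl fun n => iter n t ht x

/-- Main comparison: with sign `σ = ±1` encoded by a hypothesis on increments. -/
lemma main_cmp {N : ℕ} {J : (Fin N → ℝ) → ℝ} (hJ0 : ∀ z, 0 ≤ J z) (hJc : Continuous J)
    (hJs : HasCompactSupport J) (hJ1 : ∫ z, J z = 1) {G : (Fin N → ℝ) → ℝ → ℝ} (hG : HypG N G)
    {u₀ : (Fin N → ℝ) → ℝ} (hu₀b : ∃ M, ∀ x, |u₀ x| ≤ M) (hu₀pos : ∀ x, 0 ≤ u₀ x)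
    {u : (Fin N → ℝ) → ℝ → ℝ} (hu : CauchySolutionI N J G u₀ u) {s t : ℝ} (hs : 0 ≤ s)
    (hst : s ≤ t) {β : ℝ} (hβ : 0 < β) :
    ((∀ᵐ x : Fin N → ℝ, ∀ s : ℝ, G x s * s ≤ β * s) →
      ∫⁻ x, ENNReal.ofReal (u x t) ≤ ∫⁻ x, ENNReal.ofReal (u x s)) ∧
    ((∀ᵐ x : Fin N → ℝ, ∀ s : ℝ, β * s ≤ G x s * s) →
      ∫⁻ x, ENNReal.ofReal (u x s) ≤ ∫⁻ x, ENNReal.ofReal (u x t)) := by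
  have hT : 0 ≤ t := hs.trans hst
  obtain ⟨M, hM⟩ := sol_bdd hu₀b hu t
  have hpos := sol_nonneg hJ0 hJc hJs hJ1 hG hu₀b hu₀pos hu hT
  obtain ⟨α, hα, hgood⟩ := good_ae hG
  obtain ⟨r, hr0, hr⟩ : ∃ r, 0 ≤ r ∧ ∀ z, J z ≠ 0 → ‖z‖ ≤ r := by
    obtain ⟨r, hr⟩ := hJs.isCompact.isBounded.exists_norm_le
    refine ⟨max r 0, le_max_right _ _, fun z hz => (hr z ?_).trans (le_max_left _ _)⟩
    exact subset_tsupport _ hz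
  set U : (Fin N → ℝ) → ℝ → ℝ := fun x τ => u x (max 0 (min t τ)) with hU
  have hcl : ∀ τ, max 0 (min t τ) ∈ Icc 0 t := fun τ =>
    ⟨le_max_left _ _, max_le hT (min_le_left _ _)⟩
  have hUu : ∀ x, ∀ τ ∈ Icc 0 t, U x τ = u x τ := by
    intro x τ hτ
    rw [hU]
    simp [min_eq_right hτ.2, max_eq_right hτ.1]
  have hUc : Continuous fun p : (Fin N → ℝ) × ℝ => U p.1 p.2 := sol_cont hu t
  have hU0 : ∀ x τ, 0 ≤ U x τ := fun x τ => hpos _ (hcl τ) x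
  have hUM : ∀ x τ, U x τ ≤ M := fun x τ => (le_abs_self _).trans (hM _ (hcl τ) x)
  have hUx : ∀ τ, Continuous fun x => U x τ := fun τ =>
    hUc.comp (by fun_prop : Continuous fun x => (x, τ))
  have hM0 : 0 ≤ M := (hU0 0 0).trans (hUM 0 0)
  have hi : ∀ n τ, Integrable fun x => wt N n x * U x τ := by
    intro n τ
    refine (wt_int (n := n).mul_const M).mono' (wt_cont.mul (hUx τ)).aestronglyMeasurable
      (Eventually.of_forall fun x => ?_)
    rw [Real.norm_eq_abs, abs_of_nonneg (mul_nonneg (wt_pos x).le (hU0 x τ))]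
    exact mul_le_mul_of_nonneg_left (hUM x τ) (wt_pos x).le
  set κ : ℕ → ℝ := fun n => (1 + r / ((n : ℝ) + 1)) ^ (N + 1) - 1 with hκ
  have hκ0 : ∀ n, 0 ≤ κ n := by
    intro n
    have : 0 ≤ r / ((n : ℝ) + 1) := by positivity
    have := one_le_pow₀ (n := N + 1) (by linarith : 1 ≤ 1 + r / ((n : ℝ) + 1))
    simp only [hκ]; linarith
  set c : ℕ → ℝ := fun n => β * (t - s) * κ n with hc
  have hc0 : ∀ n, 0 ≤ c n := fun n =>
    mul_nonneg (mul_nonneg hβ.le (sub_nonneg.2 hst)) (hκ0 n)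
  have hclim : Tendsto c atTop (𝓝 0) := wt_kappa N r _
  have hchalf : ∀ᶠ n in atTop, c n ≤ 1 / 2 := hclim.eventually_le_const (by norm_num)
  have hB : ∀ n, ∀ τ ∈ Icc s t, ∫ x, wt N n x * U x τ ≤ ∫ x, wt N n x * M := fun n τ _ =>
    integral_mono (hi n τ) (wt_int.mul_const M) fun x =>
      mul_le_mul_of_nonneg_left (hUM x τ) (wt_pos x).le
  have hA : ∀ n τ, 0 ≤ ∫ x, wt N n x * U x τ := fun n τ =>
    integral_nonneg fun x => mul_nonneg (wt_pos x).le (hU0 x τ)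
  -- increments
  have hinc : ∀ᵐ x : Fin N → ℝ, ∀ a b, s ≤ a → a ≤ b → b ≤ t →
      U x b - U x a = ∫ τ in a..b,
        ∫ z, J z * ((U (x - z) τ - U x τ) * G x (U (x - z) τ - U x τ)) := by
    filter_upwards [hgood] with x hx a b ha hab hb
    obtain ⟨hhc, hrep⟩ := sol_eq hJ0 hJc hJs hu₀b hu hT hU hα hx
    rw [hrep b ⟨by linarith, hb⟩, hrep a ⟨by linarith, by linarith⟩, add_sub_add_left_eq_sub]
    exact intervalIntegral.integral_interval_sub_left (hhc.intervalIntegrable _ _)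
      (hhc.intervalIntegrable _ _)
  have hlin : ∀ x, Continuous fun τ => ∫ z, J z * (U (x - z) τ - U x τ) := fun x =>
    (aux_cont hJ0 hJc hJs (g := fun s => s) (α := 1) zero_le_one (by simp) rfl continuous_id hUc
      (M := M) (fun x τ => by rw [abs_of_nonneg (hU0 x τ)]; exact hUM x τ)).comp
      (by fun_prop : Continuous fun τ : ℝ => (x, τ))
  have hzint1 : ∀ x τ, Integrable fun z => J z * (β * (U (x - z) τ - U x τ)) := by
    intro x τ
    have hcz : Continuous fun z => U (x - z) τ :=
      hUc.comp (by fun_prop : Continuous fun z => (x - z, τ))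
    exact Continuous.integrable_of_hasCompactSupport (by fun_prop) hJs.mul_right
  have hzint2 : ∀ x τ, GoodG α (fun s => s * G x s) → Integrable fun z =>
      J z * ((U (x - z) τ - U x τ) * G x (U (x - z) τ - U x τ)) := by
    intro x τ hx
    have hcz : Continuous fun z => U (x - z) τ :=
      hUc.comp (by fun_prop : Continuous fun z => (x - z, τ))
    refine Continuous.integrable_of_hasCompactSupport ?_ hJs.mul_right
    exact hJc.mul (hx.1.comp (hcz.sub continuous_const))
  have hpull : ∀ x τ, ∫ z, J z * (β * (U (x - z) τ - U x τ))
      = β * ∫ z, J z * (U (x - z) τ - U x τ) := by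
    intro x τ
    rw [← integral_const_mul]; congr 1; ext z; ring
  -- the linear functional
  set L : (Fin N → ℝ) → ℝ → ℝ → ℝ :=
    fun x a b => ∫ τ in a..b, ∫ z, J z * (U (x - z) τ - U x τ) with hL
  have hest : ∀ n S, (∀ τ ∈ Icc s t, ∫ x, wt N n x * U x τ ≤ S) → ∀ a b, s ≤ a → a ≤ b → b ≤ t →
      Integrable (fun x => wt N n x * L x a b) ∧
      β * |∫ x, wt N n x * L x a b| ≤ c n * S := by
    intro n S hS a b ha hab hb
    obtain ⟨h1, h2⟩ := aux_time hJ0 hJc hJs hJ1 hr hUc hU0 hUM (wt_cont (n := n)) wt_int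
      (fun x => (wt_pos x).le) (hκ0 n) (fun x z hz => wt_shift hr0 x z hz) hab (S := S)
      (fun τ hτ => hS τ ⟨ha.trans hτ.1, hτ.2.trans hb⟩)
    refine ⟨h1, ?_⟩
    have hS0 : 0 ≤ S := (hA n s).trans (hS s ⟨le_rfl, hst⟩)
    have h3 : κ n * S * (b - a) ≤ κ n * S * (t - s) :=
      mul_le_mul_of_nonneg_left (by linarith) (mul_nonneg (hκ0 n) hS0)
    have h4 := mul_le_mul_of_nonneg_left (h2.trans h3) hβ.le
    refine h4.trans (le_of_eq ?_)
    simp only [hc]; ring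
  have hsm : s ∈ Icc 0 t := ⟨hs, hst⟩
  have htm : t ∈ Icc 0 t := ⟨hT, le_rfl⟩
  constructor
  · intro hle
    have hdiff : ∀ᵐ x : Fin N → ℝ, ∀ a b, s ≤ a → a ≤ b → b ≤ t →
        U x b ≤ U x a + β * L x a b := by
      filter_upwards [hinc, hle, hgood] with x hx hle hg a b ha hab hb
      have h1 := hx a b ha hab hb
      have h2 : U x b - U x a ≤ ∫ τ in a..b, β * ∫ z, J z * (U (x - z) τ - U x τ) := by
        rw [h1]
        refine intervalIntegral.integral_mono_on hab
          ((sol_eq hJ0 hJc hJs hu₀b hu hT hU hα hg).1.intervalIntegrable _ _)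
          (((hlin x).const_mul β).intervalIntegrable _ _) fun τ _ => ?_
        rw [← hpull]
        refine integral_mono (hzint2 x τ hg) (hzint1 x τ) fun z => ?_
        refine mul_le_mul_of_nonneg_left ?_ (hJ0 z)
        rw [mul_comm]
        exact hle _
      rw [intervalIntegral.integral_const_mul] at h2
      simp only [hL]; linarith
    simp_rw [← fun x => hUu x s hsm, ← fun x => hUu x t htm]
    refine wt_limit (hUx t) (hUx s) (fun x => hU0 x t) (fun x => hU0 x s) (fun x => hUM x t)
      (fun x => hUM x s) (c := fun n => 2 * c n) (by simpa using hclim.const_mul 2) ?_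
    filter_upwards [hchalf] with n hn
    refine aux_sup (f := fun τ => ∫ x, wt N n x * U x τ) (hB n) (hc0 n) hn (hA n s) ?_ t
      ⟨hst, le_rfl⟩
    intro S hS τ hτ
    obtain ⟨h1, h2⟩ := hest n S hS s τ le_rfl hτ.1 hτ.2
    have h3 : ∫ x, wt N n x * U x τ ≤ ∫ x, (wt N n x * U x s + β * (wt N n x * L x s τ)) := by
      refine integral_mono_ae (hi n τ) ((hi n s).add (h1.const_mul β)) ?_
      filter_upwards [hdiff] with x hx
      have := mul_le_mul_of_nonneg_left (hx s τ le_rfl hτ.1 hτ.2) (wt_pos (n := n) x).le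
      linarith
    rw [integral_add (hi n s) (h1.const_mul β), integral_const_mul] at h3
    have h4 := mul_le_mul_of_nonneg_left (le_abs_self (∫ x, wt N n x * L x s τ)) hβ.le
    linarith
  · intro hle
    have hdiff : ∀ᵐ x : Fin N → ℝ, ∀ a b, s ≤ a → a ≤ b → b ≤ t →
        U x a ≤ U x b - β * L x a b := by
      filter_upwards [hinc, hle, hgood] with x hx hle hg a b ha hab hb
      have h1 := hx a b ha hab hb
      have h2 : ∫ τ in a..b, β * ∫ z, J z * (U (x - z) τ - U x τ) ≤ U x b - U x a := by
        rw [h1]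
        refine intervalIntegral.integral_mono_on hab
          (((hlin x).const_mul β).intervalIntegrable _ _)
          ((sol_eq hJ0 hJc hJs hu₀b hu hT hU hα hg).1.intervalIntegrable _ _) fun τ _ => ?_
        rw [← hpull]
        refine integral_mono (hzint1 x τ) (hzint2 x τ hg) fun z => ?_
        refine mul_le_mul_of_nonneg_left ?_ (hJ0 z)
        rw [mul_comm (U (x - z) τ - U x τ) (G x _)]
        exact hle _
      rw [intervalIntegral.integral_const_mul] at h2
      simp only [hL]; linarith
    simp_rw [← fun x => hUu x s hsm, ← fun x => hUu x t htm]
    refine wt_limit (hUx s) (hUx t) (fun x => hU0 x s) (fun x => hU0 x t) (fun x => hUM x s)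
      (fun x => hUM x t) (c := fun n => 2 * c n) (by simpa using hclim.const_mul 2) ?_
    filter_upwards [hchalf] with n hn
    refine aux_sup (f := fun τ => ∫ x, wt N n x * U x τ) (hB n) (hc0 n) hn (hA n t) ?_ s
      ⟨le_rfl, hst⟩
    intro S hS τ hτ
    obtain ⟨h1, h2⟩ := hest n S hS τ t hτ.1 hτ.2 le_rfl
    have h3 : ∫ x, wt N n x * U x τ ≤ ∫ x, (wt N n x * U x t - β * (wt N n x * L x τ t)) := by
      refine integral_mono_ae (hi n τ) ((hi n t).sub (h1.const_mul β)) ?_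
      filter_upwards [hdiff] with x hx
      have := mul_le_mul_of_nonneg_left (hx τ t hτ.1 hτ.2 le_rfl) (wt_pos (n := n) x).le
      linarith
    rw [integral_sub (hi n t) (h1.const_mul β), integral_const_mul] at h3
    have h4 := mul_le_mul_of_nonneg_left (neg_le_abs (∫ x, wt N n x * L x τ t)) hβ.le
    linarith

/-- **Monotonicity of the `L¹` norm of a nonnegative solution of the Cauchy problem (C)**:
the `L¹` norm decreases in the absorption case and increases in the reaction case. -/
theorem L1_norm_monotone
    (N : ℕ) (hN : 1 ≤ N)
    (J : (Fin N → ℝ) → ℝ) (hJ : HypJ N J)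
    (G : (Fin N → ℝ) → ℝ → ℝ) (hG : HypG N G)
    (u₀ : (Fin N → ℝ) → ℝ) (hu₀c : Continuous u₀) (hu₀b : ∃ M, ∀ x, |u₀ x| ≤ M)
    (hu₀int : Integrable u₀) (hu₀pos : ∀ x, 0 ≤ u₀ x)
    (u : (Fin N → ℝ) → ℝ → ℝ) (hu : CauchySolutionI N J G u₀ u) :
    ((∃ β > (0 : ℝ), ∀ᵐ x : Fin N → ℝ, ∀ s : ℝ, G x s * s ≤ β * s) →
      (∀ t ∈ Ici (0 : ℝ), Integrable fun x => u x t) ∧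
      AntitoneOn (fun t => ∫ x, |u x t|) (Ici (0 : ℝ)) ∧
      ∀ t ∈ Ici (0 : ℝ), (∫ x, |u x t|) ≤ ∫ x, |u₀ x|) ∧
    ((∃ β > (0 : ℝ), ∀ᵐ x : Fin N → ℝ, ∀ s : ℝ, β * s ≤ G x s * s) →
      MonotoneOn (fun t => ∫⁻ x, ENNReal.ofReal |u x t|) (Ici (0 : ℝ)) ∧
      ∀ t ∈ Ici (0 : ℝ), (∫⁻ x, ENNReal.ofReal |u₀ x|) ≤ ∫⁻ x, ENNReal.ofReal |u x t|) := by
  obtain ⟨hJ0, -, hJc, hJs, hJ1, -⟩ := hJ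
  have hpos : ∀ t ∈ Ici (0 : ℝ), ∀ x, 0 ≤ u x t := fun t ht x =>
    sol_nonneg hJ0 hJc hJs hJ1 hG hu₀b hu₀pos hu ht t ⟨ht, le_rfl⟩ x
  have habs : ∀ t ∈ Ici (0 : ℝ), ∀ x, |u x t| = u x t := fun t ht x => abs_of_nonneg (hpos t ht x)
  have h00 : (0 : ℝ) ∈ Ici (0 : ℝ) := self_mem_Ici
  constructor
  · rintro ⟨β, hβ, hle⟩
    have key : ∀ s t : ℝ, 0 ≤ s → s ≤ t →
        ∫⁻ x, ENNReal.ofReal (u x t) ≤ ∫⁻ x, ENNReal.ofReal (u x s) := fun s t hs hst =>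
      (main_cmp hJ0 hJc hJs hJ1 hG hu₀b hu₀pos hu hs hst hβ).1 hle
    have hint : ∀ t ∈ Ici (0 : ℝ), Integrable fun x => u x t := by
      intro t ht
      refine ⟨(hu.1 t ht).aestronglyMeasurable, ?_⟩
      rw [hasFiniteIntegral_iff_ofReal (Eventually.of_forall (hpos t ht))]
      refine (key 0 t le_rfl ht).trans_lt ?_
      simp_rw [hu.2.2.1]
      exact (hasFiniteIntegral_iff_ofReal (Eventually.of_forall hu₀pos)).1 hu₀int.2
    have hanti : AntitoneOn (fun t => ∫ x, |u x t|) (Ici (0 : ℝ)) := by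
      intro s hs t ht hst
      simp only [habs s hs, habs t ht]
      have := key s t hs hst
      rw [← ofReal_integral_eq_lintegral_ofReal (hint t ht) (Eventually.of_forall (hpos t ht)),
        ← ofReal_integral_eq_lintegral_ofReal (hint s hs) (Eventually.of_forall (hpos s hs))] at this
      exact (ENNReal.ofReal_le_ofReal_iff (integral_nonneg (hpos s hs))).1 this
    refine ⟨hint, hanti, fun t ht => ?_⟩
    have := hanti h00 ht ht
    simpa only [hu.2.2.1] using this
  · rintro ⟨β, hβ, hle⟩
    have hmono : MonotoneOn (fun t => ∫⁻ x, ENNReal.ofReal |u x t|) (Ici (0 : ℝ)) := by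
      intro s hs t ht hst
      simp only [habs s hs, habs t ht]
      exact (main_cmp hJ0 hJc hJs hJ1 hG hu₀b hu₀pos hu hs hst hβ).2 hle
    refine ⟨hmono, fun t ht => ?_⟩
    have := hmono h00 ht ht
    simpa only [hu.2.2.1] using this
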